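/- arXiv:1903.08072 — 3 statements merged into one kernel-verified Lean document; each statement's English description precedes it below -/
import Mathlib

section
/- For every nonempty compact set C ⊆ ℝ^I, every continuous function f : ℝ^I → ℝ, and every ε > 0, there exist a positive integer k, matrices W₁, W₂ : Fin k → (Fin I → ℝ), and vectors b₁, b₂ : Fin k → ℝ such that for all x ∈ C, |f(x) − ( (max over j ∈ Fin k of (∑ i, W₁ j i * x i + b₁ j)) − (max over j ∈ Fin k of (∑ i, W₂ j i * x i + b₂ j)) )| ≤ ε. In other words, a Max-plus model with two output units in its Max-plus block (whose classification score is the difference of the two output units) can approximate arbitrarily well any continuous function on a compact domain. -/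
/-- maximum of finitely many affine functions -/
def MPfun (I : ℕ) (g : (Fin I → ℝ) → ℝ) : Prop :=
  ∃ (ι : Type) (_ : Fintype ι) (_ : Nonempty ι) (W : ι → Fin I → ℝ) (b : ι → ℝ),
    ∀ x, (∀ j, ∑ i, W j i * x i + b j ≤ g x) ∧ ∃ j, ∑ i, W j i * x i + b j = g x

lemma MPfun.affine {I : ℕ} (w : Fin I → ℝ) (c : ℝ) :
    MPfun I (fun x => ∑ i, w i * x i + c) :=
  ⟨Unit, inferInstance, inferInstance, fun _ => w, fun _ => c,
    fun _ => ⟨fun _ => le_rfl, (), rfl⟩⟩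

lemma MPfun.add {I : ℕ} {g h : (Fin I → ℝ) → ℝ} (hg : MPfun I g) (hh : MPfun I h) :
    MPfun I (fun x => g x + h x) := by
  obtain ⟨ι, _, _, W, b, H⟩ := hg
  obtain ⟨κ, _, _, V, c, K⟩ := hh
  have key : ∀ (x : Fin I → ℝ) (j : ι × κ), ∑ i, (W j.1 i + V j.2 i) * x i + (b j.1 + c j.2)
      = (∑ i, W j.1 i * x i + b j.1) + (∑ i, V j.2 i * x i + c j.2) := by
    intro x j
    simp only [add_mul, Finset.sum_add_distrib]
    ring
  refine ⟨ι × κ, inferInstance, inferInstance, fun j i => W j.1 i + V j.2 i,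
    fun j => b j.1 + c j.2, fun x => ⟨fun j => ?_, ?_⟩⟩
  · rw [key]
    exact add_le_add ((H x).1 _) ((K x).1 _)
  · obtain ⟨j, hj⟩ := (H x).2
    obtain ⟨l, hl⟩ := (K x).2
    refine ⟨(j, l), ?_⟩
    rw [key, hj, hl]

lemma MPfun.max {I : ℕ} {g h : (Fin I → ℝ) → ℝ} (hg : MPfun I g) (hh : MPfun I h) :
    MPfun I (fun x => Max.max (g x) (h x)) := by
  obtain ⟨ι, _, _, W, b, H⟩ := hg
  obtain ⟨κ, _, _, V, c, K⟩ := hh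
  refine ⟨ι ⊕ κ, inferInstance, inferInstance, Sum.elim W V, Sum.elim b c,
    fun x => ⟨?_, ?_⟩⟩
  · rintro (j | j)
    · exact le_max_of_le_left ((H x).1 j)
    · exact le_max_of_le_right ((K x).1 j)
  · obtain ⟨j, hj⟩ := (H x).2
    obtain ⟨l, hl⟩ := (K x).2
    rcases le_total (g x) (h x) with h1 | h1
    · exact ⟨Sum.inr l, hl.trans (max_eq_right h1).symm⟩
    · exact ⟨Sum.inl j, hj.trans (max_eq_left h1).symm⟩

lemma MPfun.common {I : ℕ} {g h : (Fin I → ℝ) → ℝ} (hg : MPfun I g) (hh : MPfun I h) :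
    ∃ k : ℕ, 0 < k ∧ ∃ (W₁ W₂ : Fin k → Fin I → ℝ) (b₁ b₂ : Fin k → ℝ), ∀ x,
      (⨆ j : Fin k, (∑ i, W₁ j i * x i + b₁ j)) = g x ∧
      (⨆ j : Fin k, (∑ i, W₂ j i * x i + b₂ j)) = h x := by
  obtain ⟨ι, _, _, W, b, H⟩ := hg
  obtain ⟨κ, _, _, V, c, K⟩ := hh
  let e := (Fintype.equivFin (ι × κ)).symm
  have hk : 0 < Fintype.card (ι × κ) := Fintype.card_pos
  have : Nonempty (Fin (Fintype.card (ι × κ))) := ⟨⟨0, hk⟩⟩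
  refine ⟨Fintype.card (ι × κ), hk, fun j => W (e j).1, fun j => V (e j).2,
    fun j => b (e j).1, fun j => c (e j).2, fun x => ?_⟩
  obtain ⟨j, hj⟩ := (H x).2
  obtain ⟨l, hl⟩ := (K x).2
  constructor
  · apply le_antisymm (ciSup_le fun m => (H x).1 _)
    refine le_ciSup_of_le (Set.finite_range _).bddAbove (e.symm (j, l)) ?_
    simp [hj]
  · apply le_antisymm (ciSup_le fun m => (K x).1 _)
    refine le_ciSup_of_le (Set.finite_range _).bddAbove (e.symm (j, l)) ?_
    simp [hl]

/-- **Universal function approximator.**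
A Max-plus model with two output units in its Max-plus block (whose scalar
output is the difference of the two output units, each a maximum of finitely
many affine functions of the input) can approximate arbitrarily well, in the
uniform norm, any continuous function on a nonempty compact set `C ⊆ ℝ^I`. -/
theorem maxplus_universal_approximation
    (I : ℕ) (C : Set (Fin I → ℝ)) (hC : IsCompact C) (hCne : C.Nonempty)
    (f : (Fin I → ℝ) → ℝ) (hf : Continuous f) (ε : ℝ) (hε : 0 < ε) :
    ∃ (k : ℕ), 0 < k ∧
      ∃ (W₁ W₂ : Fin k → Fin I → ℝ) (b₁ b₂ : Fin k → ℝ),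
        ∀ x ∈ C,
          |f x -
            ((⨆ j : Fin k, (∑ i, W₁ j i * x i + b₁ j)) -
             (⨆ j : Fin k, (∑ i, W₂ j i * x i + b₂ j)))| ≤ ε := by
  have : CompactSpace C := isCompact_iff_compactSpace.mp hC
  let L : Set C(C, ℝ) := {φ | ∃ g h, MPfun I g ∧ MPfun I h ∧ ∀ x : C, φ x = g x - h x}
  have zero : MPfun I (fun x => ∑ i, (0 : Fin I → ℝ) i * x i + 0) := MPfun.affine 0 0
  have hL : closure L = ⊤ := by
    apply ContinuousMap.sublattice_closure_eq_top
    · exact ⟨0, _, _, zero, zero, fun x => by simp⟩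
    · rintro p ⟨g₁, h₁, hg₁, hh₁, e₁⟩ q ⟨g₂, h₂, hg₂, hh₂, e₂⟩
      refine ⟨_, _, hg₁.add hg₂, (hg₁.add hh₂).max (hg₂.add hh₁), fun x => ?_⟩
      rw [ContinuousMap.inf_apply, e₁, e₂]
      rcases le_total (g₁ x + h₂ x) (g₂ x + h₁ x) with h | h
      · rw [max_eq_right h, inf_eq_left.mpr (by linarith)]; ring
      · rw [max_eq_left h, inf_eq_right.mpr (by linarith)]; ring
    · rintro p ⟨g₁, h₁, hg₁, hh₁, e₁⟩ q ⟨g₂, h₂, hg₂, hh₂, e₂⟩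
      refine ⟨_, _, (hg₁.add hh₂).max (hg₂.add hh₁), hh₁.add hh₂, fun x => ?_⟩
      rw [ContinuousMap.sup_apply, e₁, e₂]
      rcases le_total (g₁ x + h₂ x) (g₂ x + h₁ x) with h | h
      · rw [max_eq_right h, sup_eq_right.mpr (by linarith)]; ring
      · rw [max_eq_left h, sup_eq_left.mpr (by linarith)]; ring
    · intro v x y
      have aff : ∀ (w : Fin I → ℝ) (c : ℝ), ∃ φ ∈ L, ∀ x : C, φ x = ∑ i, w i * x.1 i + c := by
        intro w c
        refine ⟨⟨fun x : C => ∑ i, w i * x.1 i + c, (continuous_finsetSum _ fun i _ => continuous_const.mul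
            ((continuous_apply i).comp continuous_subtype_val)).add continuous_const⟩,
          ⟨_, _, MPfun.affine w c, zero, fun x => by simp⟩, fun x => rfl⟩
      by_cases hxy : x = y
      · subst hxy
        obtain ⟨φ, hφ, h⟩ := aff 0 (v x)
        exact ⟨φ, hφ, by simp [h], by simp [h]⟩
      · obtain ⟨i, hi⟩ : ∃ i, x.1 i ≠ y.1 i := by
          by_contra! hcon
          exact hxy (Subtype.ext (funext hcon))
        have hi' : x.1 i - y.1 i ≠ 0 := sub_ne_zero.mpr hi
        obtain ⟨φ, hφ, h⟩ := aff (Pi.single i ((v x - v y) / (x.1 i - y.1 i)))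
          (v x - (v x - v y) / (x.1 i - y.1 i) * x.1 i)
        refine ⟨φ, hφ, ?_, ?_⟩
        · rw [h]; simp [Pi.single_apply]
        · rw [h]; simp [Pi.single_apply]; field_simp; ring
  let F : C(C, ℝ) := ⟨fun x => f x, by fun_prop⟩
  have hF : F ∈ closure L := by rw [hL]; trivial
  obtain ⟨φ, ⟨g, h, hg, hh, e⟩, hφ⟩ := Metric.mem_closure_iff.mp hF ε hε
  obtain ⟨k, hk, W₁, W₂, b₁, b₂, H⟩ := hg.common hh
  refine ⟨k, hk, W₁, W₂, b₁, b₂, fun x hx => ?_⟩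
  rw [(H x).1, (H x).2]
  have h1 := (ContinuousMap.dist_apply_le_dist (f := F) (g := φ) ⟨x, hx⟩).trans hφ.le
  rw [Real.dist_eq, e] at h1
  exact h1
end

section
/- Fix positive integers I and k, matrices W₁, W₂ : Fin k → (Fin I → ℝ), and vectors b₁, b₂ : Fin k → ℝ. Define the fully-connected layer output y : Fin (2k) → ℝ by y_j = ∑_i W₁ j i * x_i for j in the first k coordinates and y_j = ∑_i W₂ (j−k) i * x_i for j in the last k coordinates, and define Max-plus weights w¹, w² : Fin (2k) → EReal by w¹_j = b₁ j for j in the first k coordinates and w¹_j = −∞ otherwise, and w²_j = b₂ (j−k) for j in the last k coordinates and w²_j = −∞ otherwise. Then for every x : Fin I → ℝ, the first Max-plus output z₁(x) = max over j ∈ Fin (2k) of ((y_j : EReal) + w¹_j) equals (max over j ∈ Fin k of (∑ i, W₁ j i * x i + b₁ j) : ℝ) coerced to EReal, and similarly z₂(x) = max over j ∈ Fin (2k) of ((y_j : EReal) + w²_j) equals (max over j ∈ Fin k of (∑ i, W₂ j i * x i + b₂ j) : ℝ) coerced to EReal. -/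
theorem iSup_aux_block {k n : ℕ} (hk : 0 < k) (f : Fin k → ℝ) (g : Fin n → EReal)
    (h1 : ∀ j, g j = ⊥ ∨ ∃ i, g j = (f i : EReal))
    (h2 : ∀ i, ∃ j, g j = (f i : EReal)) :
    (⨆ j, g j) = ((⨆ i, f i : ℝ) : EReal) := by
  haveI : Nonempty (Fin k) := ⟨⟨0, hk⟩⟩
  apply le_antisymm
  · refine iSup_le fun j => ?_
    rcases h1 j with h | ⟨i, h⟩
    · rw [h]; exact bot_le
    · rw [h]
      exact EReal.coe_le_coe_iff.2 (le_ciSup (Set.finite_range f).bddAbove i)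
  · obtain ⟨i, hi⟩ := exists_eq_ciSup_of_finite (f := f)
    obtain ⟨j, hj⟩ := h2 i
    rw [← hi, ← hj]
    exact le_iSup g j

/-- The construction in the proof of the universal approximation theorem:
a Max-plus block with `2k` hidden units and two output units, whose Max-plus
weight rows are `[b₁ᵀ, -∞, …, -∞]` and `[-∞, …, -∞, b₂ᵀ]`, computes in its two
output units exactly the two maxima of `k` affine functions each. -/
theorem maxplus_block_two_outputs
    (I k : ℕ) (hI : 0 < I) (hk : 0 < k)
    (W₁ W₂ : Fin k → Fin I → ℝ) (b₁ b₂ : Fin k → ℝ)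
    (y : (Fin I → ℝ) → Fin (2 * k) → ℝ)
    (hy : ∀ x : Fin I → ℝ, ∀ j : Fin (2 * k),
      y x j = if h : (j : ℕ) < k then ∑ i, W₁ ⟨j, h⟩ i * x i
              else ∑ i, W₂ ⟨(j : ℕ) - k, by omega⟩ i * x i)
    (w₁ w₂ : Fin (2 * k) → EReal)
    (hw₁ : ∀ j : Fin (2 * k),
      w₁ j = if h : (j : ℕ) < k then ((b₁ ⟨j, h⟩ : ℝ) : EReal) else ⊥)
    (hw₂ : ∀ j : Fin (2 * k),
      w₂ j = if h : (j : ℕ) < k then ⊥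
             else ((b₂ ⟨(j : ℕ) - k, by omega⟩ : ℝ) : EReal)) :
    ∀ x : Fin I → ℝ,
      (⨆ j : Fin (2 * k), ((y x j : EReal) + w₁ j)) =
        (((⨆ j : Fin k, (∑ i, W₁ j i * x i + b₁ j) : ℝ)) : EReal) ∧
      (⨆ j : Fin (2 * k), ((y x j : EReal) + w₂ j)) =
        (((⨆ j : Fin k, (∑ i, W₂ j i * x i + b₂ j) : ℝ)) : EReal) := by
  intro x
  constructor
  · apply iSup_aux_block hk
    · intro j
      by_cases h : (j : ℕ) < k
      · right
        refine ⟨⟨j, h⟩, ?_⟩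
        rw [hy, hw₁, dif_pos h, dif_pos h, EReal.coe_add]
      · left
        rw [hw₁, dif_neg h, EReal.add_bot]
    · intro i
      refine ⟨⟨i, by omega⟩, ?_⟩
      rw [hy, hw₁, dif_pos i.2, dif_pos i.2, EReal.coe_add]
  · apply iSup_aux_block hk
    · intro j
      by_cases h : (j : ℕ) < k
      · left
        rw [hw₂, dif_pos h, EReal.add_bot]
      · right
        refine ⟨⟨(j : ℕ) - k, by omega⟩, ?_⟩
        rw [hy, hw₂, dif_neg h, dif_neg h, EReal.coe_add]
    · intro i
      have h : ¬ ((i : ℕ) + k < k) := by omega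
      refine ⟨⟨(i : ℕ) + k, by omega⟩, ?_⟩
      rw [hy, hw₂, dif_neg h, dif_neg h, EReal.coe_add]
      simp only [Nat.add_sub_cancel]
end

section
/- Let n be a positive integer, w : Fin n → ℝ a weight vector, and b : EReal a bias. Define the morphological perceptron a : (Fin n → EReal) → EReal by a(x) = max( b, max over i ∈ Fin n of (x_i + (w_i : EReal)) ). Then a is a dilation on the complete lattice (Fin n → EReal) with the pointwise (Pareto) order, in the sense that for every nonempty set S of vectors in (Fin n → EReal), a(sSup S) = ⨆ x ∈ S, a(x). -/
/-- The morphological perceptron `a(x) = max(b, max_i (x_i + w_i))` is a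
dilation on the complete lattice `(Fin n → EReal)` with the pointwise (Pareto)
order: it commutes with suprema of nonempty sets. -/
theorem morphological_perceptron_isDilation
    (n : ℕ) (hn : 0 < n) (w : Fin n → ℝ) (b : EReal)
    (a : (Fin n → EReal) → EReal)
    (ha : ∀ x : Fin n → EReal, a x = max b (⨆ i : Fin n, (x i + (w i : EReal)))) :
    ∀ S : Set (Fin n → EReal), S.Nonempty → a (sSup S) = ⨆ x ∈ S, a x := by
  intro S hS
  apply le_antisymm
  · rw [ha]
    apply max_le
    · obtain ⟨x, hx⟩ := hS
      refine le_trans ?_ (le_iSup₂ (f := fun x (_ : x ∈ S) => a x) x hx)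
      simp only [ha]
      exact le_max_left _ _
    · refine iSup_le fun i => ?_
      rw [← EReal.le_sub_iff_add_le (Or.inl (EReal.coe_ne_bot _)) (Or.inl (EReal.coe_ne_top _))]
      rw [_root_.sSup_apply]
      refine iSup_le fun x => ?_
      rw [EReal.le_sub_iff_add_le (Or.inl (EReal.coe_ne_bot _)) (Or.inl (EReal.coe_ne_top _))]
      refine le_trans ?_ (le_iSup₂ (f := fun x (_ : x ∈ S) => a x) x.1 x.2)
      simp only [ha]
      exact le_trans (le_iSup (fun i => x.1 i + (w i : EReal)) i) (le_max_right _ _)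
  · refine iSup₂_le fun x hx => ?_
    rw [ha, ha]
    exact max_le_max le_rfl (iSup_mono fun i => add_le_add_left (le_sSup hx i) _)
end
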